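/- Let m ≥ 2, x₀ ∈ ℝⁿ, r > 0, j ≥ 1. If x ∈ B(x₀,r) and y ∈ B(x₀, 2^{j+1}r) \ B(x₀, 2^j r), and all derivatives Dᵞ A with |γ| = m−1 belong to BMO(ℝⁿ), then |R_m(A;x,y)| ≤ C |x−y|^{m−1} ( j ∑_{|γ|=m−1} ‖Dᵞ A‖_* + ∑_{|γ|=m−1} |Dᵞ A(y) − (Dᵞ A)_{B(x₀,r)}| ), with C independent of x, y, j, r, A. -/

import Mathlib

open MeasureTheory Metric

/-- Partial derivative `∂/∂xᵢ` of a function on `ℝⁿ`. -/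
noncomputable def pderiv (n : ℕ) (i : Fin n) (f : EuclideanSpace ℝ (Fin n) → ℝ) :
    EuclideanSpace ℝ (Fin n) → ℝ :=
  fun x => fderiv ℝ f x (EuclideanSpace.single i 1)

/-- The multi-index derivative `D^γ f = ∂^{γ₁}_{x₁} ⋯ ∂^{γₙ}_{xₙ} f`. -/
noncomputable def mderiv (n : ℕ) (γ : Fin n → ℕ)
    (f : EuclideanSpace ℝ (Fin n) → ℝ) : EuclideanSpace ℝ (Fin n) → ℝ :=
  (List.finRange n).foldr (fun i g => (pderiv n i)^[γ i] g) f

/-- The `m`-th order Taylor remainder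
`R_m(A;x,y) = A(x) - ∑_{|γ|<m} (1/γ!) D^γ A(y) (x-y)^γ`. -/
noncomputable def taylorRem (n m : ℕ) (A : EuclideanSpace ℝ (Fin n) → ℝ)
    (x y : EuclideanSpace ℝ (Fin n)) : ℝ :=
  A x - ∑ γ : Fin n → Fin m,
    if (∑ i, (γ i : ℕ)) < m then
      (∏ i, (Nat.factorial (γ i) : ℝ))⁻¹ *
        mderiv n (fun i => (γ i : ℕ)) A y * ∏ i, (x i - y i) ^ (γ i : ℕ)
    else 0

/-- The average of `f` over the ball `B(x₀,r)`. -/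
noncomputable def ballAvg (n : ℕ) (f : EuclideanSpace ℝ (Fin n) → ℝ)
    (x₀ : EuclideanSpace ℝ (Fin n)) (r : ℝ) : ℝ :=
  (volume (ball x₀ r)).toReal⁻¹ * ∫ u in ball x₀ r, f u

/-! ### Partial derivatives -/

section jets
variable {n : ℕ}

local notation "E" => EuclideanSpace ℝ (Fin n)

lemma pderiv_contDiff {p : ℕ} (i : Fin n) {f : E → ℝ} (hf : ContDiff ℝ (p + 1 : ℕ) f) :
    ContDiff ℝ p (pderiv n i f) := by
  have h : ContDiff ℝ p (fderiv ℝ f) := hf.fderiv_right (by norm_cast)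
  exact h.clm_apply contDiff_const

lemma pderiv_comm (i l : Fin n) {f : E → ℝ} (hf : ContDiff ℝ 2 f) :
    pderiv n i (pderiv n l f) = pderiv n l (pderiv n i f) := by
  funext x
  have h : Differentiable ℝ (fderiv ℝ f) :=
    (hf.fderiv_right (m := 1) (by norm_num)).differentiable (by norm_num)
  have hs : IsSymmSndFDerivAt ℝ f x := hf.contDiffAt.isSymmSndFDerivAt (by simp)
  have key : ∀ a b : Fin n, pderiv n a (pderiv n b f) x =
      fderiv ℝ (fderiv ℝ f) x (EuclideanSpace.single a 1) (EuclideanSpace.single b 1) := by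
    intro a b
    unfold pderiv
    rw [fderiv_clm_apply (h x) (differentiableAt_const _)]
    simp
  rw [key, key]
  exact hs _ _

lemma pderiv_iter_contDiff {p : ℕ} (i : Fin n) (q : ℕ) : ∀ {f : E → ℝ},
    ContDiff ℝ (p + q : ℕ) f → ContDiff ℝ p ((pderiv n i)^[q] f) := by
  induction q with
  | zero => intro f hf; simpa using hf
  | succ q ih =>
    intro f hf
    rw [Function.iterate_succ_apply]
    exact ih (pderiv_contDiff i (by simpa [add_assoc] using hf))

lemma pderiv_iter_comm (i l : Fin n) (q : ℕ) : ∀ {f : E → ℝ}, ContDiff ℝ (q + 1 : ℕ) f →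
    pderiv n i ((pderiv n l)^[q] f) = (pderiv n l)^[q] (pderiv n i f) := by
  induction q with
  | zero => intro f hf; rfl
  | succ q ih =>
    intro f hf
    rw [Function.iterate_succ_apply, Function.iterate_succ_apply, ih (pderiv_contDiff l hf),
      pderiv_comm i l (hf.of_le (by norm_cast; omega))]

/-- Partial version of `mderiv` along a list. -/
noncomputable def lderiv (γ : Fin n → ℕ) (L : List (Fin n)) (f : E → ℝ) : E → ℝ :=
  L.foldr (fun i g => (pderiv n i)^[γ i] g) f

lemma lderiv_contDiff (γ : Fin n → ℕ) (L : List (Fin n)) : ∀ {p : ℕ} {f : E → ℝ},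
    ContDiff ℝ (p + (L.map γ).sum : ℕ) f → ContDiff ℝ p (lderiv γ L f) := by
  induction L with
  | nil => intro p f hf; simpa [lderiv] using hf
  | cons a L ih =>
    intro p f hf
    have : ContDiff ℝ (p + γ a : ℕ) (lderiv γ L f) := ih (by
      simpa [add_assoc] using hf)
    exact pderiv_iter_contDiff a (γ a) this

lemma lderiv_congr (γ δ : Fin n → ℕ) (L : List (Fin n)) (f : E → ℝ) (h : ∀ i ∈ L, γ i = δ i) :
    lderiv γ L f = lderiv δ L f := by
  induction L with
  | nil => rfl
  | cons a L ih =>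
    change (pderiv n a)^[γ a] (lderiv γ L f) = (pderiv n a)^[δ a] (lderiv δ L f)
    rw [ih (fun i hi => h i (by simp [hi])), h a (by simp)]

lemma pderiv_lderiv (γ δ : Fin n → ℕ) (i : Fin n) (hi : δ i = γ i + 1)
    (hne : ∀ l, l ≠ i → δ l = γ l) (L : List (Fin n)) (f : E → ℝ) (hL : L.Nodup) (hiL : i ∈ L)
    (hf : ContDiff ℝ ((L.map γ).sum + 1 : ℕ) f) :
    pderiv n i (lderiv γ L f) = lderiv δ L f := by
  induction L with
  | nil => simp at hiL
  | cons a L ih =>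
    change pderiv n i ((pderiv n a)^[γ a] (lderiv γ L f)) = (pderiv n a)^[δ a] (lderiv δ L f)
    rw [List.nodup_cons] at hL
    by_cases hai : a = i
    · subst hai
      rw [hi, Function.iterate_succ_apply']
      rw [lderiv_congr γ δ L f]
      intro l hl
      rw [hne]
      rintro rfl
      exact hL.1 hl
    · have hiL' : i ∈ L := by
        rcases List.mem_cons.1 hiL with h | h
        · exact absurd h.symm hai
        · exact h
      have e1 : ContDiff ℝ ((L.map γ).sum + 1 : ℕ) f := hf.of_le (by
        rw [List.map_cons, List.sum_cons]; exact_mod_cast (by omega))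
      have e2 : ContDiff ℝ (γ a + 1 : ℕ) (lderiv γ L f) := by
        apply lderiv_contDiff
        exact hf.of_le (by rw [List.map_cons, List.sum_cons]; exact_mod_cast (by omega))
      rw [hne a hai, pderiv_iter_comm i a _ e2, ih hL.2 hiL' e1]

lemma mderiv_contDiff (γ : Fin n → ℕ) {p : ℕ} {f : E → ℝ}
    (hf : ContDiff ℝ (p + ∑ i, γ i : ℕ) f) : ContDiff ℝ p (mderiv n γ f) := by
  apply lderiv_contDiff γ (List.finRange n)
  rwa [← Fin.sum_univ_def] 

lemma pderiv_mderiv (γ δ : Fin n → ℕ) (i : Fin n) (hi : δ i = γ i + 1)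
    (hne : ∀ l, l ≠ i → δ l = γ l) (f : E → ℝ) (hf : ContDiff ℝ ((∑ i, γ i) + 1 : ℕ) f) :
    pderiv n i (mderiv n γ f) = mderiv n δ f := by
  apply pderiv_lderiv γ δ i hi hne (List.finRange n) f (List.nodup_finRange n)
    (List.mem_finRange i)
  rwa [← Fin.sum_univ_def]

lemma mderiv_hasDerivAt (γ : Fin n →₀ ℕ) (f : E → ℝ) (hf : ContDiff ℝ ((∑ i, γ i) + 1 : ℕ) f)
    (y w : E) (t : ℝ) :
    HasDerivAt (fun s : ℝ => mderiv n γ f (y + s • w))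
      (∑ i, w i * mderiv n (Finsupp.single i 1 + γ : Fin n →₀ ℕ) f (y + t • w)) t := by
  have h1 : ContDiff ℝ 1 (mderiv n γ f) := by
    have := mderiv_contDiff γ (p := 1) (f := f) (by rwa [add_comm])
    simpa using this
  have h2 : HasFDerivAt (mderiv n γ f) (fderiv ℝ (mderiv n γ f) (y + t • w)) (y + t • w) :=
    (h1.differentiable (by norm_num) _).hasFDerivAt
  have h3 : HasDerivAt (fun s : ℝ => y + s • w) w t := by
    simpa using ((hasDerivAt_id t).smul_const w).const_add y
  have h4 := h2.comp_hasDerivAt t h3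
  refine h4.congr_deriv ?_
  symm
  have hw : w = ∑ i, w i • EuclideanSpace.single i (1 : ℝ) := by
    ext l; simp [Finset.sum_apply, Pi.single_apply]
  have hL : ∀ L : E →L[ℝ] ℝ, L w = ∑ i, w i * L (EuclideanSpace.single i (1 : ℝ)) := by
    intro L
    conv_lhs => rw [hw]
    rw [map_sum]
    simp
  rw [hL]
  refine Finset.sum_congr rfl fun i _ => ?_
  congr 1
  have := pderiv_mderiv γ (Finsupp.single i 1 + γ : Fin n →₀ ℕ) i (by simp [add_comm])
    (fun l hl => by simp [hl.symm]) f hf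
  rw [← this]
  rfl

end jets

section polys
variable {n : ℕ}

local notation "E" => EuclideanSpace ℝ (Fin n)

/-- The linear form attached to a vector. -/
noncomputable def lin (v : E) : MvPolynomial (Fin n) ℝ := ∑ i, v i • MvPolynomial.X i

/-- The linear functional on polynomials with prescribed values on monomials. -/
noncomputable def ev (e : (Fin n →₀ ℕ) → ℝ) : MvPolynomial (Fin n) ℝ →ₗ[ℝ] ℝ :=
  (MvPolynomial.basisMonomials (Fin n) ℝ).constr ℝ e

/-- bounded multi-index to finsupp -/
noncomputable def fs {m : ℕ} (γ : Fin n → Fin m) : Fin n →₀ ℕ :=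
  Finsupp.equivFunOnFinite.symm (fun i => (γ i : ℕ))

lemma coe_fs {m : ℕ} (γ : Fin n → Fin m) : ⇑(fs γ) = fun i => (γ i : ℕ) := rfl

lemma lin_add (v w : E) : lin (v + w) = lin v + lin w := by
  simp [lin, add_smul, Finset.sum_add_distrib]

lemma lin_neg (v : E) : lin (-v) = - lin v := by
  simp [lin]

lemma lin_homog (v : E) : (lin v).IsHomogeneous 1 := by
  unfold lin
  apply MvPolynomial.IsHomogeneous.sum
  intro i _
  rw [MvPolynomial.smul_eq_C_mul]
  exact (MvPolynomial.isHomogeneous_X _ _).C_mul _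

lemma lin_pow_homog (v : E) (a : ℕ) : (lin v ^ a).IsHomogeneous a := by
  simpa using (lin_homog v).pow a

lemma ev_monomial (e : (Fin n →₀ ℕ) → ℝ) (γ : Fin n →₀ ℕ) (c : ℝ) :
    ev e (MvPolynomial.monomial γ c) = c * e γ := by
  have : MvPolynomial.monomial γ c = c • (MvPolynomial.basisMonomials (Fin n) ℝ γ) := by
    simp [MvPolynomial.coe_basisMonomials, MvPolynomial.smul_monomial]
  rw [this, map_smul, ev, Module.Basis.constr_basis, smul_eq_mul]

lemma ev_eq_sum (e : (Fin n →₀ ℕ) → ℝ) (Q : MvPolynomial (Fin n) ℝ) :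
    ev e Q = ∑ γ ∈ Q.support, Q.coeff γ * e γ := by
  conv_lhs => rw [Q.as_sum]
  rw [map_sum]
  simp_rw [ev_monomial]

lemma homog_sum {Q : MvPolynomial (Fin n) ℝ} {d : ℕ} (hQ : Q.IsHomogeneous d)
    {γ : Fin n →₀ ℕ} (hγ : γ ∈ Q.support) : ∑ i, γ i = d := by
  have h := hQ (MvPolynomial.mem_support_iff.1 hγ)
  rw [← h, Finsupp.weight_apply, Finsupp.sum_fintype] <;> simp

lemma ev_homog (e : (Fin n →₀ ℕ) → ℝ) (Q : MvPolynomial (Fin n) ℝ) {d m : ℕ}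
    (hQ : Q.IsHomogeneous d) (hd : d < m) :
    ev e Q = ∑ γ : Fin n → Fin m, if (∑ i, (γ i : ℕ)) = d then
      Q.coeff (fs γ) * e (fs γ) else 0 := by
  classical
  rw [ev_eq_sum, ← Finset.sum_filter]
  have hinj : Function.Injective (fs : (Fin n → Fin m) → _) := by
    intro a b h
    funext i
    have := DFunLike.congr_fun h i
    simpa [coe_fs, Fin.ext_iff] using this
  have him := Finset.sum_image (f := fun γ => Q.coeff γ * e γ)
    (s := Finset.univ.filter (fun γ : Fin n → Fin m => ∑ i, (γ i : ℕ) = d)) (g := fs)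
    hinj.injOn
  rw [← him]
  apply Finset.sum_subset
  · intro γ h
    have hs := homog_sum hQ h
    have hlt : ∀ i, γ i < m := fun i => lt_of_le_of_lt
      (Finset.single_le_sum (f := fun i => γ i) (fun _ _ => Nat.zero_le _) (Finset.mem_univ i))
      (hs ▸ hd)
    refine Finset.mem_image.2 ⟨fun i => ⟨γ i, hlt i⟩, ?_, ?_⟩
    · simpa using hs
    · ext i; rfl
  · intro γ _ h
    rw [MvPolynomial.notMem_support_iff.1 h, zero_mul]

lemma lin_mul_monomial (w : E) (γ : Fin n →₀ ℕ) (c : ℝ) :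
    lin w * MvPolynomial.monomial γ c =
      ∑ i, MvPolynomial.monomial (Finsupp.single i 1 + γ) (w i * c) := by
  unfold lin
  rw [Finset.sum_mul]
  refine Finset.sum_congr rfl fun i _ => ?_
  rw [MvPolynomial.X, MvPolynomial.smul_monomial, MvPolynomial.monomial_mul]
  simp

lemma ev_lin_mul (e : (Fin n →₀ ℕ) → ℝ) (w : E) (Q : MvPolynomial (Fin n) ℝ) :
    ev e (lin w * Q) = ∑ γ ∈ Q.support, Q.coeff γ * ∑ i, w i * e (Finsupp.single i 1 + γ) := by
  conv_lhs => rw [Q.as_sum]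
  rw [Finset.mul_sum, map_sum]
  refine Finset.sum_congr rfl fun γ _ => ?_
  rw [lin_mul_monomial, map_sum, Finset.mul_sum]
  refine Finset.sum_congr rfl fun i _ => ?_
  rw [ev_monomial]; ring

lemma coord_le (v : E) (i : Fin n) : |v i| ≤ ‖v‖ := by
  simpa using PiLp.norm_apply_le v i

lemma coeff_lin_mul_le (w : E) (Q : MvPolynomial (Fin n) ℝ) {R M : ℝ} (hw : ‖w‖ ≤ R)
    (hQ : ∀ γ, |Q.coeff γ| ≤ M) (γ : Fin n →₀ ℕ) : |(lin w * Q).coeff γ| ≤ n * R * M := by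
  classical
  have hM : 0 ≤ M := (abs_nonneg _).trans (hQ 0)
  unfold lin
  rw [Finset.sum_mul, MvPolynomial.coeff_sum]
  calc _ ≤ ∑ i : Fin n, |MvPolynomial.coeff γ (w i • MvPolynomial.X i * Q)| :=
        Finset.abs_sum_le_sum_abs _ _
    _ ≤ ∑ i : Fin n, R * M := by
        refine Finset.sum_le_sum fun i _ => ?_
        rw [smul_mul_assoc, MvPolynomial.coeff_smul, MvPolynomial.coeff_X_mul', smul_eq_mul,
          abs_mul]
        refine mul_le_mul ((coord_le w i).trans hw) ?_ (abs_nonneg _) ((norm_nonneg _).trans hw)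
        split_ifs
        · exact hQ _
        · simpa using hM
    _ = n * R * M := by simp; ring

lemma coeff_lin_pow_mul_le (w : E) (Q : MvPolynomial (Fin n) ℝ) {R M : ℝ} (hw : ‖w‖ ≤ R)
    (hQ : ∀ γ, |Q.coeff γ| ≤ M) (b : ℕ) (γ : Fin n →₀ ℕ) :
    |(lin w ^ b * Q).coeff γ| ≤ (n * R) ^ b * M := by
  induction b generalizing γ with
  | zero => simpa using hQ γ
  | succ b ih =>
    rw [pow_succ', mul_assoc, pow_succ', mul_assoc (n * R)]
    exact coeff_lin_mul_le w _ hw ih γ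

lemma coeff_one_le (γ : Fin n →₀ ℕ) : |(1 : MvPolynomial (Fin n) ℝ).coeff γ| ≤ 1 := by
  classical
  rw [MvPolynomial.coeff_one]
  split_ifs <;> simp

lemma coeff_two_le (v w : E) {R : ℝ} (hv : ‖v‖ ≤ R) (hw : ‖w‖ ≤ R) (a b : ℕ)
    (γ : Fin n →₀ ℕ) : |(lin w ^ b * lin v ^ a).coeff γ| ≤ (n * R) ^ (b + a) := by
  have h := coeff_lin_pow_mul_le w (lin v ^ a * 1) hw (coeff_lin_pow_mul_le v 1 hv coeff_one_le a) b γ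
  simpa [pow_add] using h

lemma ev_diff_le (e c : (Fin n →₀ ℕ) → ℝ) (v w : E) {R : ℝ} (hv : ‖v‖ ≤ R) (hw : ‖w‖ ≤ R)
    {a b m : ℕ} (h : b + a < m) :
    |ev e (lin w ^ b * lin v ^ a) - ev c (lin w ^ b * lin v ^ a)| ≤
      (n * R) ^ (b + a) * ∑ γ : Fin n → Fin m, if (∑ i, (γ i : ℕ)) = b + a then
        |e (fs γ) - c (fs γ)| else 0 := by
  have hh : (lin w ^ b * lin v ^ a).IsHomogeneous (b + a) :=
    (lin_pow_homog w b).mul (lin_pow_homog v a)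
  rw [ev_homog e _ hh h, ev_homog c _ hh h, ← Finset.sum_sub_distrib, Finset.mul_sum]
  refine (Finset.abs_sum_le_sum_abs _ _).trans (Finset.sum_le_sum fun γ _ => ?_)
  split_ifs
  · rw [← mul_sub, abs_mul]
    exact mul_le_mul_of_nonneg_right (coeff_two_le v w hv hw a b _) (abs_nonneg _)
  · simp

/-- the multinomial theorem -/
lemma coeff_lin_pow {m : ℕ} (v : E) (γ : Fin n → Fin m) {d : ℕ} (hd : ∑ i, (γ i : ℕ) = d) :
    (lin v ^ d).coeff (fs γ) / (d.factorial : ℝ) =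
      (∏ i, (Nat.factorial (γ i) : ℝ))⁻¹ * ∏ i, v i ^ (γ i : ℕ) := by
  unfold lin
  rw [MvPolynomial.coeff_linearCombination_X_pow_of_fintype]
  have h1 : (fs γ).sum (fun _ m ↦ m) = d := by
    rw [Finsupp.sum_fintype _ _ (by simp)]; exact hd
  rw [if_pos h1, Finsupp.prod_fintype _ _ (by simp),
    Finsupp.multinomial_eq_of_support_subset (Finset.subset_univ _)]
  have h2 := Nat.multinomial_spec Finset.univ (fs γ)
  simp only [coe_fs] at h2 ⊢
  rw [hd] at h2
  have h3 : (d.factorial : ℝ) = (∏ i, (Nat.factorial (γ i) : ℝ)) *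
      (Nat.multinomial Finset.univ (fun i => (γ i : ℕ)) : ℝ) := by exact_mod_cast h2.symm
  have h4 : (d.factorial : ℝ) ≠ 0 := by positivity
  have h5 : (∏ i, (Nat.factorial (γ i) : ℝ)) ≠ 0 := by positivity
  rw [div_eq_iff h4, h3]
  field_simp

/-- Jet functional of a function. -/
noncomputable def jet (A : E → ℝ) (u : E) : MvPolynomial (Fin n) ℝ →ₗ[ℝ] ℝ :=
  ev (fun γ => mderiv n γ A u)

lemma mderiv_zero (A : E → ℝ) : mderiv n (0 : Fin n →₀ ℕ) A = A := by
  unfold mderiv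
  generalize List.finRange n = L
  induction L with
  | nil => rfl
  | cons a L ih => rw [List.foldr_cons, ih]; rfl

lemma jet_one (A : E → ℝ) (u : E) : jet A u 1 = A u := by
  have : (1 : MvPolynomial (Fin n) ℝ) = MvPolynomial.monomial 0 1 := rfl
  rw [this, jet, ev_monomial, one_mul, mderiv_zero]

lemma taylorRem_eq (A : E → ℝ) (m : ℕ) (x y : E) :
    taylorRem n m A x y =
      A x - ∑ d ∈ Finset.range m, jet A y (lin (x - y) ^ d) / (d.factorial : ℝ) := by
  unfold taylorRem
  congr 1
  have h : ∀ d ∈ Finset.range m, jet A y (lin (x - y) ^ d) / (d.factorial : ℝ) =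
      ∑ γ : Fin n → Fin m, if (∑ i, (γ i : ℕ)) = d then (∏ i, (Nat.factorial (γ i) : ℝ))⁻¹ *
        mderiv n (fun i => (γ i : ℕ)) A y * ∏ i, (x i - y i) ^ (γ i : ℕ) else 0 := by
    intro d hd
    rw [jet, ev_homog _ _ (lin_pow_homog _ d) (Finset.mem_range.1 hd), Finset.sum_div]
    refine Finset.sum_congr rfl fun γ _ => ?_
    split_ifs with hγ
    · have := coeff_lin_pow (x - y) γ hγ
      rw [mul_div_right_comm, this, coe_fs]
      simp only [PiLp.sub_apply]
      ring
    · simp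
  rw [Finset.sum_congr rfl h, Finset.sum_comm]
  refine Finset.sum_congr rfl fun γ _ => ?_
  rw [Finset.sum_ite_eq]
  simp

lemma jet_hasDerivAt (A : E → ℝ) (Q : MvPolynomial (Fin n) ℝ) {d : ℕ} (hQ : Q.IsHomogeneous d)
    (hA : ContDiff ℝ (d + 1 : ℕ) A) (y w : E) (t : ℝ) :
    HasDerivAt (fun s : ℝ => jet A (y + s • w) Q) (jet A (y + t • w) (lin w * Q)) t := by
  unfold jet
  simp_rw [ev_eq_sum]
  rw [← ev_eq_sum, ev_lin_mul]
  refine HasDerivAt.fun_sum fun γ hγ => ?_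
  refine HasDerivAt.const_mul _ ?_
  exact mderiv_hasDerivAt γ A (by rwa [homog_sum hQ hγ]) y w t

lemma jet_continuous (A : E → ℝ) (Q : MvPolynomial (Fin n) ℝ) {d : ℕ} (hQ : Q.IsHomogeneous d)
    (hA : ContDiff ℝ d A) : Continuous (fun u => jet A u Q) := by
  unfold jet
  simp_rw [ev_eq_sum]
  refine continuous_finsetSum _ fun γ hγ => ?_
  refine continuous_const.mul ?_
  have := mderiv_contDiff γ (p := 0) (f := A) (by rwa [zero_add, homog_sum hQ hγ])
  exact this.continuous

end polys

section taylor
variable {n : ℕ}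

local notation "E" => EuclideanSpace ℝ (Fin n)

lemma taylor_hasDerivAt (g : ℕ → ℝ → ℝ) (t : ℝ) (b : ℕ)
    (hg : ∀ i ≤ b, HasDerivAt (g i) (g (i + 1) t) t) :
    HasDerivAt (fun s => ∑ i ∈ Finset.range (b + 1), g i s * ((-s) ^ i / (i.factorial : ℝ)))
      (g (b + 1) t * ((-t) ^ b / (b.factorial : ℝ))) t := by
  induction b with
  | zero => simpa using hg 0 le_rfl
  | succ b ih =>
    have h1 := ih (fun i hi => hg i (by omega))
    have h2 : HasDerivAt (fun s : ℝ => (-s) ^ (b + 1) / ((b + 1).factorial : ℝ))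
        (- ((-t) ^ b / (b.factorial : ℝ))) t := by
      have h := (((hasDerivAt_id t).neg).pow (b + 1)).div_const ((b + 1).factorial : ℝ)
      refine h.congr_deriv ?_
      have : (b.factorial : ℝ) ≠ 0 := by positivity
      simp only [Nat.factorial_succ, Nat.cast_mul, Nat.cast_add, Nat.cast_one,
        Nat.add_sub_cancel, id, Pi.neg_apply]
      field_simp
    have h3 := h1.add ((hg (b + 1) le_rfl).mul h2)
    simp_rw [Finset.sum_range_succ _ (b + 1)]
    refine h3.congr_deriv ?_
    ring

/-- sum of top order differences -/
noncomputable def topS (m d : ℕ) (A : E → ℝ) (c : (Fin n →₀ ℕ) → ℝ) (u : E) : ℝ :=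
  ∑ γ : Fin n → Fin m, if (∑ i, (γ i : ℕ)) = d then
    |mderiv n (fun i => (γ i : ℕ)) A u - c (fs γ)| else 0

lemma topS_nonneg (m d : ℕ) (A : E → ℝ) (c : (Fin n →₀ ℕ) → ℝ) (u : E) : 0 ≤ topS m d A c u := by
  unfold topS
  refine Finset.sum_nonneg fun γ _ => ?_
  split_ifs <;> positivity

lemma topS_continuous (m d : ℕ) (A : E → ℝ) (c : (Fin n →₀ ℕ) → ℝ) (hA : ContDiff ℝ d A) :
    Continuous (topS m d A c) := by
  unfold topS
  refine continuous_finsetSum _ fun γ _ => ?_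
  split_ifs with h
  · have := mderiv_contDiff (fun i => (γ i : ℕ)) (p := 0) (f := A) (by rwa [zero_add, h])
    exact (this.continuous.sub continuous_const).abs
  · exact continuous_const

/-- remainder with averaged top order -/
noncomputable def remG (A : E → ℝ) (c : (Fin n →₀ ℕ) → ℝ) (P : MvPolynomial (Fin n) ℝ) (b : ℕ)
    (y z : E) : ℝ :=
  jet A y P - ∑ i ∈ Finset.range b, jet A z (lin (y - z) ^ i * P) / (i.factorial : ℝ)
    - ev c (lin (y - z) ^ b * P) / (b.factorial : ℝ)

lemma map_lin_neg (L : MvPolynomial (Fin n) ℝ →ₗ[ℝ] ℝ) (w : E) (i : ℕ)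
    (P : MvPolynomial (Fin n) ℝ) :
    L (lin (-w) ^ i * P) = (-1) ^ i * L (lin w ^ i * P) := by
  have : lin (-w) ^ i * P = ((-1 : ℝ) ^ i) • (lin w ^ i * P) := by
    rw [lin_neg, neg_pow, mul_assoc, MvPolynomial.smul_eq_C_mul]
    simp
  rw [this, map_smul, smul_eq_mul]

lemma remG_le (A : E → ℝ) (c : (Fin n →₀ ℕ) → ℝ) {m a b : ℕ} (hb : 1 ≤ b) (hab : b + a < m)
    (hA : ContDiff ℝ (b + a : ℕ) A) (v y z : E) {R : ℝ} (hv : ‖v‖ ≤ R) (hw : ‖z - y‖ ≤ R) :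
    |remG A c (lin v ^ a) b y z| ≤
      (n * R) ^ (b + a) * ∫ t in (0 : ℝ)..1, topS m (b + a) A c (y + t • (z - y)) := by
  obtain ⟨b, rfl⟩ : ∃ b', b = b' + 1 := ⟨b - 1, by omega⟩
  set w := z - y with hwdef
  set P := lin v ^ a with hP
  let g : ℕ → ℝ → ℝ := fun i t => jet A (y + t • w) (lin w ^ i * P)
  have hh : ∀ i, (lin w ^ i * P).IsHomogeneous (i + a) := fun i =>
    (lin_pow_homog w i).mul (lin_pow_homog v a)
  have hg : ∀ t, ∀ i ≤ b, HasDerivAt (g i) (g (i + 1) t) t := by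
    intro t i hi
    have := jet_hasDerivAt A (lin w ^ i * P) (hh i) (hA.of_le (by exact_mod_cast (by omega))) y w t
    rw [← mul_assoc, ← pow_succ'] at this
    exact this
  let cb : ℝ := ev c (lin w ^ (b + 1) * P)
  let φ : ℝ → ℝ := fun s => ∑ i ∈ Finset.range (b + 1), g i s * ((-s) ^ i / (i.factorial : ℝ))
    + cb * ((-s) ^ (b + 1) / ((b + 1).factorial : ℝ))
  have hφ : ∀ t, HasDerivAt φ ((g (b + 1) t - cb) * ((-t) ^ b / (b.factorial : ℝ))) t := by
    intro t
    have h1 := taylor_hasDerivAt g t b (hg t)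
    have h2 : HasDerivAt (fun s : ℝ => (-s) ^ (b + 1) / ((b + 1).factorial : ℝ))
        (- ((-t) ^ b / (b.factorial : ℝ))) t := by
      have h := (((hasDerivAt_id t).neg).pow (b + 1)).div_const ((b + 1).factorial : ℝ)
      refine h.congr_deriv ?_
      have : (b.factorial : ℝ) ≠ 0 := by positivity
      simp only [Nat.factorial_succ, Nat.cast_mul, Nat.cast_add, Nat.cast_one,
        Nat.add_sub_cancel, id, Pi.neg_apply]
      field_simp
    refine (h1.add (h2.const_mul cb)).congr_deriv ?_
    ring
  have hline : Continuous (fun t : ℝ => y + t • w) := by fun_prop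
  have hgc : Continuous (g (b + 1)) := (jet_continuous A _ (hh (b + 1)) hA).comp hline
  have hint : IntervalIntegrable (fun t => (g (b + 1) t - cb) * ((-t) ^ b / (b.factorial : ℝ)))
      volume 0 1 := by
    apply Continuous.intervalIntegrable
    fun_prop
  have hftc := intervalIntegral.integral_eq_sub_of_hasDerivAt (fun t _ => hφ t) hint
  have hG : remG A c P (b + 1) y z = φ 0 - φ 1 := by
    have h0 : φ 0 = jet A y P := by
      simp only [φ, g, Finset.sum_range_succ']
      simp
    have hyz : y - z = - w := by rw [hwdef]; abel
    have hz : y + w = z := by rw [hwdef]; abel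
    rw [h0]
    simp only [remG, φ, g, hyz, map_lin_neg, one_smul, hz]
    rw [sub_sub]
    congr 2
    · refine Finset.sum_congr rfl fun i _ => ?_
      ring
    · simp only [cb]; ring
  have hSc : Continuous (fun t : ℝ => topS m (b + 1 + a) A c (y + t • w)) :=
    (topS_continuous m _ A c hA).comp hline
  rw [hG, abs_sub_comm, ← hftc, ← intervalIntegral.integral_const_mul, ← Real.norm_eq_abs]
  apply intervalIntegral.norm_integral_le_of_norm_le zero_le_one _
    ((hSc.const_mul _).intervalIntegrable _ _)
  refine Filter.Eventually.of_forall fun t ht => ?_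
  rw [Real.norm_eq_abs, abs_mul]
  have h1 : |g (b + 1) t - cb| ≤ (n * R) ^ (b + 1 + a) * topS m (b + 1 + a) A c (y + t • w) :=
    ev_diff_le _ c v w hv hw hab
  have h2 : |(-t) ^ b / (b.factorial : ℝ)| ≤ 1 := by
    rw [abs_div, abs_pow, abs_neg, abs_of_pos ht.1, Nat.abs_cast]
    apply div_le_one_of_le₀ _ (by positivity)
    calc t ^ b ≤ 1 := pow_le_one₀ ht.1.le ht.2
      _ ≤ b.factorial := by exact_mod_cast Nat.factorial_pos b
  calc _ ≤ |g (b + 1) t - cb| * 1 := mul_le_mul_of_nonneg_left h2 (abs_nonneg _)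
    _ ≤ _ := by rw [mul_one]; exact h1

lemma map_binom (L : MvPolynomial (Fin n) ℝ →ₗ[ℝ] ℝ) (p q : MvPolynomial (Fin n) ℝ) (d : ℕ) :
    L ((p + q) ^ d) / (d.factorial : ℝ) = ∑ a ∈ Finset.range (d + 1),
      L (q ^ (d - a) * p ^ a) / ((d - a).factorial : ℝ) / (a.factorial : ℝ) := by
  rw [add_pow, map_sum, Finset.sum_div]
  refine Finset.sum_congr rfl fun a ha => ?_
  have ha' : a ≤ d := by simpa [Nat.lt_succ_iff] using ha
  have : p ^ a * q ^ (d - a) * (d.choose a : MvPolynomial (Fin n) ℝ) =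
      (d.choose a : ℝ) • (q ^ (d - a) * p ^ a) := by
    rw [MvPolynomial.smul_eq_C_mul]; simp; ring
  rw [this, map_smul, smul_eq_mul, Nat.cast_choose ℝ ha']
  have h1 : (d.factorial : ℝ) ≠ 0 := by positivity
  field_simp

lemma rem_identity (A : E → ℝ) (c : (Fin n →₀ ℕ) → ℝ) (k : ℕ) (x y z : E) :
    A x - ∑ d ∈ Finset.range k, jet A y (lin (x - y) ^ d) / (d.factorial : ℝ)
      - ev c (lin (x - y) ^ k) / (k.factorial : ℝ) =
    remG A c 1 k x z - ∑ a ∈ Finset.range k,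
      remG A c (lin (x - y) ^ a) (k - a) y z / (a.factorial : ℝ) := by
  have hx : lin (x - z) = lin (x - y) + lin (y - z) := by rw [← lin_add]; congr 1; abel
  simp only [remG, mul_one, jet_one, sub_div, Finset.sum_sub_distrib]
  rw [hx]
  simp_rw [map_binom]
  rw [Finset.sum_range_diag_flip k (fun a i => jet A z (lin (y - z) ^ i * lin (x - y) ^ a) /
    (i.factorial : ℝ) / (a.factorial : ℝ)), Finset.sum_range_succ _ k]
  simp only [Finset.sum_div, Nat.sub_self, pow_zero, one_mul, Nat.factorial_zero, Nat.cast_one,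
    div_one]
  ring

lemma rem_le (A : E → ℝ) (c : (Fin n →₀ ℕ) → ℝ) {m k : ℕ} (hk : 1 ≤ k) (hkm : k < m)
    (hA : ContDiff ℝ k A) (x y z : E) {R : ℝ} (hv : ‖x - y‖ ≤ R) (hx : ‖z - x‖ ≤ R)
    (hy : ‖z - y‖ ≤ R) :
    |A x - ∑ d ∈ Finset.range k, jet A y (lin (x - y) ^ d) / (d.factorial : ℝ)
      - ev c (lin (x - y) ^ k) / (k.factorial : ℝ)| ≤
    (n * R) ^ k * ((∫ t in (0 : ℝ)..1, topS m k A c (x + t • (z - x))) +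
      k * ∫ t in (0 : ℝ)..1, topS m k A c (y + t • (z - y))) := by
  rw [rem_identity A c k x y z, mul_add]
  have h1 : |remG A c 1 k x z| ≤
      (n * R) ^ k * ∫ t in (0 : ℝ)..1, topS m k A c (x + t • (z - x)) := by
    have := remG_le A c (m := m) (a := 0) hk (by simpa using hkm) (by simpa using hA)
      (x - y) x z hv hx
    simpa using this
  have h2 : ∀ a ∈ Finset.range k, |remG A c (lin (x - y) ^ a) (k - a) y z / (a.factorial : ℝ)| ≤
      (n * R) ^ k * ∫ t in (0 : ℝ)..1, topS m k A c (y + t • (z - y)) := by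
    intro a ha
    have ha' := Finset.mem_range.1 ha
    have e : k - a + a = k := by omega
    have := remG_le A c (m := m) (a := a) (b := k - a) (by omega) (by omega) (by rwa [e])
      (x - y) y z hv hy
    rw [e] at this
    rw [abs_div, Nat.abs_cast]
    refine (div_le_self (abs_nonneg _) ?_).trans this
    exact_mod_cast Nat.factorial_pos a
  refine (abs_sub _ _).trans (add_le_add h1 ?_)
  refine (Finset.abs_sum_le_sum_abs _ _).trans ((Finset.sum_le_sum h2).trans ?_)
  simp only [Finset.sum_const, Finset.card_range, nsmul_eq_mul]
  apply le_of_eq; ring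

end taylor

section bmo
variable {n : ℕ}

local notation "E" => EuclideanSpace ℝ (Fin n)

/-- real volume of a ball -/
lemma vol_ball (z : E) {ρ : ℝ} (hρ : 0 < ρ) :
    (volume (ball z ρ)).toReal = ρ ^ n * (volume (ball (0 : E) 1)).toReal := by
  rw [Measure.addHaar_ball_of_pos _ _ hρ, ENNReal.toReal_mul, finrank_euclideanSpace_fin,
    ENNReal.toReal_ofReal (by positivity)]

lemma vol_ball_pos (z : E) {ρ : ℝ} (hρ : 0 < ρ) : 0 < (volume (ball z ρ)).toReal :=
  ENNReal.toReal_pos (measure_ball_pos _ _ hρ).ne' measure_ball_lt_top.ne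

lemma cont_intOn {f : E → ℝ} (hf : Continuous f) (z : E) (ρ : ℝ) : IntegrableOn f (ball z ρ) :=
  (hf.continuousOn.integrableOn_compact (isCompact_closedBall z ρ)).mono_set
    ball_subset_closedBall

/-- BMO bound -/
def BmoLe (f : E → ℝ) (N : ℝ) : Prop := ∀ (z : E) (ρ : ℝ), 0 < ρ →
  (volume (ball z ρ)).toReal⁻¹ * ∫ u in ball z ρ, |f u - ballAvg n f z ρ| ≤ N

lemma avg_sub_le {f : E → ℝ} (hf : Continuous f) (z : E) {ρ : ℝ} (hρ : 0 < ρ) (a : ℝ) :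
    |ballAvg n f z ρ - a| ≤ (volume (ball z ρ)).toReal⁻¹ * ∫ u in ball z ρ, |f u - a| := by
  have hp := vol_ball_pos z hρ
  have h1 : ballAvg n f z ρ - a = (volume (ball z ρ)).toReal⁻¹ * ∫ u in ball z ρ, (f u - a) := by
    rw [integral_sub (cont_intOn hf z ρ) (cont_intOn continuous_const z ρ), setIntegral_const,
      mul_sub, ballAvg, measureReal_def, smul_eq_mul]
    field_simp
  rw [h1, abs_mul, abs_of_pos (inv_pos.2 hp)]
  exact mul_le_mul_of_nonneg_left (abs_integral_le_integral_abs) (inv_pos.2 hp).le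

lemma avg_nested {f : E → ℝ} (hf : Continuous f) {N : ℝ} (hN : BmoLe f N) {z z' : E} {ρ ρ' M : ℝ}
    (hρ : 0 < ρ) (hρ' : 0 < ρ') (hM : ρ ≤ M * ρ') (hsub : ball z' ρ' ⊆ ball z ρ) :
    |ballAvg n f z' ρ' - ballAvg n f z ρ| ≤ M ^ n * N := by
  have hp := vol_ball_pos z hρ
  have hp' := vol_ball_pos z' hρ'
  have h1 := avg_sub_le hf z' hρ' (ballAvg n f z ρ)
  have hc : Continuous (fun u => |f u - ballAvg n f z ρ|) := (hf.sub continuous_const).abs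
  have h2 : ∫ u in ball z' ρ', |f u - ballAvg n f z ρ| ≤
      ∫ u in ball z ρ, |f u - ballAvg n f z ρ| :=
    setIntegral_mono_set (cont_intOn hc z ρ) (Filter.Eventually.of_forall fun _ => abs_nonneg _)
      hsub.eventuallyLE
  have h3 := hN z ρ hρ
  have hN0 : 0 ≤ N := le_trans (mul_nonneg (inv_pos.2 hp).le
    (integral_nonneg fun _ => abs_nonneg _)) h3
  rw [inv_mul_le_iff₀ hp] at h3
  refine h1.trans ?_
  rw [inv_mul_le_iff₀ hp']
  refine h2.trans (h3.trans ?_)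
  rw [← mul_assoc]
  refine mul_le_mul_of_nonneg_right ?_ hN0
  rw [vol_ball z hρ, vol_ball z' hρ', mul_right_comm, mul_comm (ρ' ^ n), ← mul_pow]
  refine mul_le_mul_of_nonneg_right ?_ ENNReal.toReal_nonneg
  exact pow_le_pow_left₀ hρ.le hM n

lemma avg_chain {f : E → ℝ} (hf : Continuous f) {N : ℝ} (hN : BmoLe f N) (z : E) {ρ : ℝ}
    (hρ : 0 < ρ) (q : ℕ) :
    |ballAvg n f z ρ - ballAvg n f z (2 ^ q * ρ)| ≤ q * (2 ^ n * N) := by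
  induction q with
  | zero => simp
  | succ q ih =>
    have h := avg_nested hf hN (z := z) (z' := z) (ρ := 2 ^ (q + 1) * ρ) (ρ' := 2 ^ q * ρ) (M := 2)
      (by positivity) (by positivity) (by rw [pow_succ]; linarith)
      (ball_subset_ball (by rw [pow_succ]; nlinarith [pow_pos (two_pos : (0 : ℝ) < 2) q]))
    calc _ ≤ |ballAvg n f z ρ - ballAvg n f z (2 ^ q * ρ)| +
          |ballAvg n f z (2 ^ q * ρ) - ballAvg n f z (2 ^ (q + 1) * ρ)| := abs_sub_le _ _ _
      _ ≤ _ := by push_cast; linarith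

lemma exists_dyadic {t : ℝ} (ht : 0 < t) (ht1 : t ≤ 1) :
    ∃ q : ℕ, 1 ≤ 2 ^ q * t ∧ 2 ^ q * t ≤ 2 ∧ (q : ℝ) ≤ 4 * t ^ (-(1 / 2) : ℝ) := by
  obtain ⟨q, hq1, hq2⟩ := exists_nat_pow_near (x := t⁻¹) (y := (2 : ℝ))
    ((one_le_inv₀ ht).2 ht1) one_lt_two
  have hle : (2 : ℝ) ^ (q + 1) * t ≤ 2 := by
    rw [pow_succ]
    have : (2 : ℝ) ^ q * t ≤ t⁻¹ * t := mul_le_mul_of_nonneg_right hq1 ht.le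
    rw [inv_mul_cancel₀ ht.ne'] at this
    linarith
  refine ⟨q + 1, ?_, hle, ?_⟩
  · have := mul_le_mul_of_nonneg_right hq2.le ht.le
    rwa [inv_mul_cancel₀ ht.ne'] at this
  · have hsq : ∀ p : ℕ, (p : ℝ) ^ 2 ≤ 4 * 2 ^ p := by
      intro p
      have : p ^ 2 ≤ 4 * 2 ^ p := by
        induction p with
        | zero => simp
        | succ p ih =>
          rcases Nat.lt_or_ge p 3 with h | h
          · interval_cases p <;> norm_num
          · rw [pow_succ 2]; nlinarith
      exact_mod_cast this
    rw [Real.rpow_neg ht.le, ← Real.sqrt_eq_rpow]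
    have hs : 0 < Real.sqrt t := Real.sqrt_pos.2 ht
    rw [← div_eq_mul_inv, le_div_iff₀ hs]
    apply abs_le_of_sq_le_sq' _ (by norm_num) |>.2
    rw [mul_pow, Real.sq_sqrt ht.le]
    have := mul_le_mul_of_nonneg_right (hsq (q + 1)) ht.le
    nlinarith

/-- The key averaged bound. -/
lemma bmo_dev {f : E → ℝ} (hf : Continuous f) {N : ℝ} (hN : BmoLe f N) {x₀ p : E} {r : ℝ}
    (hr : 0 < r) (j : ℕ) (hp : p ∈ ball x₀ (2 ^ (j + 1) * r)) {t : ℝ} (ht : 0 < t) (ht1 : t ≤ 1) :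
    ∫ u in ball p (t * (2 ^ (j + 2) * r)), |f u - ballAvg n f x₀ r| ≤
      (volume (ball p (t * (2 ^ (j + 2) * r)))).toReal *
        (4 ^ n * N * (j + 6 + 4 * t ^ (-(1 / 2) : ℝ))) := by
  set R := (2 : ℝ) ^ (j + 2) * r with hR
  have hRpos : 0 < R := by positivity
  have htR : 0 < t * R := by positivity
  have hN0 : 0 ≤ N := le_trans (mul_nonneg (inv_nonneg.2 ENNReal.toReal_nonneg)
    (integral_nonneg fun _ => abs_nonneg _)) (hN x₀ r hr)
  have hv := vol_ball_pos p htR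
  obtain ⟨q, hq1, hq2, hq3⟩ := exists_dyadic ht ht1
  have h1 := avg_chain hf hN p htR q
  have h2 := avg_chain hf hN x₀ hr (j + 4)
  have hb : (2 : ℝ) ^ (j + 4) * r = 4 * R := by rw [hR]; ring
  have hρR : (2 : ℝ) ^ (j + 1) * r = R / 2 := by rw [hR]; ring
  rw [hρR, mem_ball] at hp
  have e : (2 : ℝ) ^ q * (t * R) = (2 ^ q * t) * R := by ring
  rw [e] at h1
  have h3 := avg_nested hf hN (z := x₀) (z' := p) (ρ := 4 * R) (ρ' := (2 ^ q * t) * R) (M := 4)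
    (by positivity) (by positivity) (by nlinarith)
    (ball_subset_ball' (by nlinarith))
  rw [hb] at h2
  have h24 : (2 : ℝ) ^ n * N ≤ 4 ^ n * N :=
    mul_le_mul_of_nonneg_right (pow_le_pow_left₀ (by norm_num) (by norm_num) n) hN0
  have h14 : N ≤ 4 ^ n * N := le_mul_of_one_le_left hN0 (one_le_pow₀ (by norm_num))
  set K := (4 : ℝ) ^ n * N with hK
  have hK0 : 0 ≤ K := by positivity
  have hqK : (q : ℝ) * (2 ^ n * N) ≤ 4 * t ^ (-(1 / 2) : ℝ) * K :=
    mul_le_mul hq3 h24 (by positivity) (by positivity)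
  have hjK : ((j + 4 : ℕ) : ℝ) * (2 ^ n * N) ≤ (j + 4) * K := by
    push_cast
    exact mul_le_mul_of_nonneg_left h24 (by positivity)
  have h4 : |ballAvg n f p (t * R) - ballAvg n f x₀ r| ≤ K * (j + 5 + 4 * t ^ (-(1 / 2) : ℝ)) := by
    have s1 := abs_sub_le (ballAvg n f p (t * R)) (ballAvg n f p (2 ^ q * t * R)) (ballAvg n f x₀ r)
    have s2 := abs_sub_le (ballAvg n f p (2 ^ q * t * R)) (ballAvg n f x₀ (4 * R))
      (ballAvg n f x₀ r)
    rw [abs_sub_comm (ballAvg n f x₀ (4 * R))] at s2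
    nlinarith
  have h5 := hN p (t * R) htR
  rw [inv_mul_le_iff₀ hv] at h5
  have hc1 : Continuous (fun u => |f u - ballAvg n f p (t * R)|) := (hf.sub continuous_const).abs
  have hc2 : Continuous (fun u => |f u - ballAvg n f x₀ r|) := (hf.sub continuous_const).abs
  calc ∫ u in ball p (t * R), |f u - ballAvg n f x₀ r|
      ≤ ∫ u in ball p (t * R), (|f u - ballAvg n f p (t * R)| +
          K * (j + 5 + 4 * t ^ (-(1 / 2) : ℝ))) := by
        apply setIntegral_mono (cont_intOn hc2 _ _)
          (cont_intOn (hc1.add continuous_const) _ _)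
        intro u
        exact (abs_sub_le _ _ _).trans (add_le_add_right h4 _)
    _ = (∫ u in ball p (t * R), |f u - ballAvg n f p (t * R)|) +
          (volume (ball p (t * R))).toReal * (K * (j + 5 + 4 * t ^ (-(1 / 2) : ℝ))) := by
        rw [integral_add (cont_intOn hc1 _ _) (cont_intOn continuous_const _ _),
          setIntegral_const, measureReal_def, smul_eq_mul]
    _ ≤ (volume (ball p (t * R))).toReal * K +
          (volume (ball p (t * R))).toReal * (K * (j + 5 + 4 * t ^ (-(1 / 2) : ℝ))) := by
        gcongr
        exact h5.trans (mul_le_mul_of_nonneg_left h14 hv.le)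
    _ = _ := by ring

lemma scale_integral (S : E → ℝ) (p : E) {R t : ℝ} (ht : 0 < t) :
    ∫ z in ball p R, S (p + t • (z - p)) = (t ^ n)⁻¹ * ∫ u in ball p (t * R), S u := by
  rw [← integral_indicator measurableSet_ball, ← integral_indicator measurableSet_ball]
  set F := (ball p (t * R)).indicator S with hF
  have h1 : (ball p R).indicator (fun z => S (p + t • (z - p))) =
      fun z => F (p + t • (z - p)) := by
    funext z
    have : p + t • (z - p) ∈ ball p (t * R) ↔ z ∈ ball p R := by
      rw [mem_ball, mem_ball, dist_eq_norm, dist_eq_norm, add_sub_cancel_left, norm_smul,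
        Real.norm_of_nonneg ht.le, mul_lt_mul_iff_right₀ ht]
    by_cases h : z ∈ ball p R
    · rw [Set.indicator_of_mem h, hF, Set.indicator_of_mem (this.2 h)]
    · rw [Set.indicator_of_notMem h, hF, Set.indicator_of_notMem (fun h' => h (this.1 h'))]
  rw [h1, integral_sub_right_eq_self (fun w => F (p + t • w)) p,
    Measure.integral_comp_smul volume (fun w => F (p + w)) t, integral_add_left_eq_self F p,
    finrank_euclideanSpace_fin, abs_of_pos (by positivity), smul_eq_mul]

lemma averaged_bound {S : E → ℝ} (hS : Continuous S) (p : E) {R α β : ℝ}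
    (hR : 0 < R) (hB : ∀ t : ℝ, 0 < t → t ≤ 1 → ∫ u in ball p (t * R), S u ≤
      (volume (ball p (t * R))).toReal * (α + β * t ^ (-(1 / 2) : ℝ))) :
    ∫ z in ball p R, ∫ t in (0 : ℝ)..1, S (p + t • (z - p)) ≤
      (volume (ball p R)).toReal * (α + 2 * β) := by
  have hcont : Continuous (Function.uncurry fun (t : ℝ) (z : E) => S (p + t • (z - p))) := by
    unfold Function.uncurry
    fun_prop
  have hint : Integrable (Function.uncurry fun (t : ℝ) (z : E) => S (p + t • (z - p)))
      ((volume.restrict (Set.uIoc 0 1)).prod (volume.restrict (ball p R))) := by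
    rw [Measure.prod_restrict]
    have : IntegrableOn (Function.uncurry fun (t : ℝ) (z : E) => S (p + t • (z - p)))
        (Set.Icc 0 1 ×ˢ closedBall p R) (volume.prod volume) :=
      hcont.continuousOn.integrableOn_compact (isCompact_Icc.prod (isCompact_closedBall p R))
    refine this.mono_set (Set.prod_mono ?_ ball_subset_closedBall)
    rw [Set.uIoc_of_le zero_le_one]
    exact Set.Ioc_subset_Icc_self
  rw [← intervalIntegral_integral_swap hint]
  have hrp : IntervalIntegrable (fun t : ℝ => t ^ (-(1 / 2) : ℝ)) volume 0 1 :=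
    intervalIntegral.intervalIntegrable_rpow' (by norm_num)
  have hr2 : IntervalIntegrable (fun t : ℝ => (volume (ball p R)).toReal *
      (α + β * t ^ (-(1 / 2) : ℝ))) volume 0 1 :=
    (intervalIntegrable_const.add (hrp.const_mul β)).const_mul _
  have hI : ∫ t in (0 : ℝ)..1, t ^ (-(1 / 2) : ℝ) = 2 := by
    rw [integral_rpow (Or.inl (by norm_num))]; norm_num
  have hval : ∫ t in (0 : ℝ)..1, (volume (ball p R)).toReal *
      (α + β * t ^ (-(1 / 2) : ℝ)) = (volume (ball p R)).toReal * (α + 2 * β) := by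
    rw [intervalIntegral.integral_const_mul, intervalIntegral.integral_add
      intervalIntegrable_const (hrp.const_mul β), intervalIntegral.integral_const_mul, hI]
    simp; ring_nf; simp
  rw [← hval]
  have hl : IntervalIntegrable (fun t : ℝ => ∫ z in ball p R, S (p + t • (z - p))) volume 0 1 := by
    rw [intervalIntegrable_iff]
    exact hint.integral_prod_left
  refine intervalIntegral.integral_mono_on_of_le_Ioo zero_le_one hl hr2 fun t ht => ?_
  rw [scale_integral S p ht.1, inv_mul_le_iff₀ (by have := ht.1; positivity)]
  refine (hB t ht.1 ht.2.le).trans (le_of_eq ?_)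
  rw [vol_ball p hR, vol_ball p (mul_pos ht.1 hR)]
  ring

end bmo

lemma topS_dev {n m k : ℕ} (A : EuclideanSpace ℝ (Fin n) → ℝ) (hA : ContDiff ℝ k A)
    (N : (Fin n → Fin m) → ℝ)
    (hN : ∀ γ : Fin n → Fin m, (∑ i, (γ i : ℕ)) = k →
      BmoLe (mderiv n (fun i => (γ i : ℕ)) A) (N γ))
    {x₀ p : EuclideanSpace ℝ (Fin n)} {r : ℝ}
    (hr : 0 < r) (j : ℕ) (hp : p ∈ ball x₀ (2 ^ (j + 1) * r)) {t : ℝ} (ht : 0 < t) (ht1 : t ≤ 1) :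
    ∫ u in ball p (t * (2 ^ (j + 2) * r)),
        topS m k A (fun γ => ballAvg n (mderiv n γ A) x₀ r) u ≤
      (volume (ball p (t * (2 ^ (j + 2) * r)))).toReal *
        (4 ^ n * (∑ γ : Fin n → Fin m, if (∑ i, (γ i : ℕ)) = k then N γ else 0) * (j + 6) +
        4 ^ n * (∑ γ : Fin n → Fin m, if (∑ i, (γ i : ℕ)) = k then N γ else 0) * 4 *
          t ^ (-(1 / 2) : ℝ)) := by
  have hc : ∀ γ : Fin n → Fin m, (∑ i, (γ i : ℕ)) = k →
      Continuous (mderiv n (fun i => (γ i : ℕ)) A) := by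
    intro γ h
    have := mderiv_contDiff (fun i => (γ i : ℕ)) (p := 0) (f := A) (by rwa [zero_add, h])
    exact this.continuous
  unfold topS
  rw [integral_finsetSum]
  · set SN := ∑ γ : Fin n → Fin m, if (∑ i, (γ i : ℕ)) = k then N γ else 0 with hSN
    have e : (4 : ℝ) ^ n * SN * (j + 6) + 4 ^ n * SN * 4 * t ^ (-(1 / 2) : ℝ) =
      4 ^ n * SN * (j + 6 + 4 * t ^ (-(1 / 2) : ℝ)) := by ring
    rw [e, hSN]
    rw [Finset.mul_sum, Finset.sum_mul, Finset.mul_sum]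
    refine Finset.sum_le_sum fun γ _ => ?_
    split_ifs with h
    · have := bmo_dev (hc γ h) (hN γ h) hr j hp ht ht1
      refine this.trans (le_of_eq ?_)
      ring
    · simp
  · intro γ _
    split_ifs with h
    · exact cont_intOn ((hc γ h).sub continuous_const).abs _ _
    · exact integrable_zero _ _ _

/-- Let `m ≥ 2` and suppose all `D^γ A` with `|γ| = m-1` lie in
`BMO(ℝⁿ)`, with `‖D^γ A‖_* ≤ N γ`. Then there is `C > 0`, independent of
`x, y, j, r, A`, such that for `x ∈ B(x₀,r)` and
`y ∈ B(x₀,2^{j+1}r) \ B(x₀,2^j r)` (`j ≥ 1`),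
`|R_m(A;x,y)| ≤ C |x-y|^{m-1} (j ∑_{|γ|=m-1} N γ
  + ∑_{|γ|=m-1} |D^γ A(y) - (D^γ A)_{B(x₀,r)}|)`. -/
theorem stmt14 (n m : ℕ) (hn : 0 < n) (hm : 2 ≤ m) :
    ∃ C : ℝ, 0 < C ∧
      ∀ (A : EuclideanSpace ℝ (Fin n) → ℝ), ContDiff ℝ m A →
      ∀ (N : (Fin n → Fin m) → ℝ),
      (∀ γ : Fin n → Fin m, (∑ i, (γ i : ℕ)) = m - 1 →
        0 ≤ N γ ∧
        -- `‖D^γ A‖_* ≤ N γ`: BMO seminorm bound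
        ∀ (z : EuclideanSpace ℝ (Fin n)) (ρ : ℝ), 0 < ρ →
          (volume (ball z ρ)).toReal⁻¹ *
            ∫ u in ball z ρ,
              |mderiv n (fun i => (γ i : ℕ)) A u -
                ballAvg n (mderiv n (fun i => (γ i : ℕ)) A) z ρ| ≤ N γ) →
      ∀ (x₀ : EuclideanSpace ℝ (Fin n)) (r : ℝ), 0 < r → ∀ j : ℕ, 1 ≤ j →
      ∀ x ∈ ball x₀ r,
      ∀ y ∈ ball x₀ (2 ^ (j + 1) * r) \ ball x₀ (2 ^ j * r),
        |taylorRem n m A x y| ≤ C * ‖x - y‖ ^ (m - 1) *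
          ((j : ℝ) * (∑ γ : Fin n → Fin m,
              if (∑ i, (γ i : ℕ)) = m - 1 then N γ else 0) +
            ∑ γ : Fin n → Fin m,
              if (∑ i, (γ i : ℕ)) = m - 1 then
                |mderiv n (fun i => (γ i : ℕ)) A y -
                  ballAvg n (mderiv n (fun i => (γ i : ℕ)) A) x₀ r|
              else 0) := by
  obtain ⟨k, rfl⟩ : ∃ k, m = k + 1 := ⟨m - 1, by omega⟩
  have hk : 1 ≤ k := by omega
  simp only [Nat.add_sub_cancel]
  have hn' : (0 : ℝ) < n := by exact_mod_cast hn
  refine ⟨(k + 1) * (n * 8) ^ k * (15 * 8 ^ n), by positivity, ?_⟩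
  intro A hA N hN x₀ r hr j hj x hx y hy
  have hAk : ContDiff ℝ k A := hA.of_le (by exact_mod_cast Nat.le_succ k)
  set c : (Fin n →₀ ℕ) → ℝ := fun γ => ballAvg n (mderiv n γ A) x₀ r with hc
  set SN := ∑ γ : Fin n → Fin (k + 1), if (∑ i, (γ i : ℕ)) = k then N γ else 0 with hSN
  change _ ≤ _ * (_ + topS (k + 1) k A c y)
  have hSN0 : 0 ≤ SN := by
    refine Finset.sum_nonneg fun γ _ => ?_
    split_ifs with h
    · exact (hN γ h).1
    · exact le_rfl
  set R := (2 : ℝ) ^ (j + 2) * r with hR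
  have hRpos : 0 < R := by positivity
  have hρ : (2 : ℝ) ^ (j + 1) * r = R / 2 := by rw [hR]; ring
  have hρ2 : (2 : ℝ) ^ j * r = R / 4 := by rw [hR]; ring
  have hrR : r ≤ R / 8 := by
    have : (2 : ℝ) ^ 1 ≤ 2 ^ j := pow_le_pow_right₀ (by norm_num) hj
    nlinarith
  have hx1 : ‖x - x₀‖ < r := by rw [← dist_eq_norm]; exact hx
  have hy1 : ‖y - x₀‖ < R / 2 := by rw [← dist_eq_norm, ← hρ]; exact hy.1
  have hy2 : R / 4 ≤ ‖y - x₀‖ := by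
    have := hy.2
    rw [mem_ball, not_lt, dist_eq_norm, hρ2] at this
    exact this
  have hxρ : x ∈ ball x₀ (2 ^ (j + 1) * r) := by
    rw [mem_ball, dist_eq_norm, hρ]; linarith
  have hvR : ‖x - y‖ ≤ R := by
    have := norm_sub_le_norm_sub_add_norm_sub x x₀ y
    rw [norm_sub_rev x₀ y] at this
    linarith
  have hRv : R ≤ 8 * ‖x - y‖ := by
    have := norm_sub_le_norm_sub_add_norm_sub y x x₀
    rw [norm_sub_rev y x] at this
    linarith
  -- the averaged bounds
  have hScont : Continuous (topS (k + 1) k A c) := topS_continuous _ _ A c hAk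
  have hS0 : ∀ u, 0 ≤ topS (k + 1) k A c u := topS_nonneg _ _ A c
  let H : EuclideanSpace ℝ (Fin n) → EuclideanSpace ℝ (Fin n) → ℝ := fun p z =>
    ∫ t in (0 : ℝ)..1, topS (k + 1) k A c (p + t • (z - p))
  have hHc : ∀ p, Continuous (H p) := by
    intro p
    apply intervalIntegral.continuous_parametric_intervalIntegral_of_continuous'
    unfold Function.uncurry
    fun_prop
  have hH0 : ∀ p z, 0 ≤ H p z := fun p z =>
    intervalIntegral.integral_nonneg zero_le_one fun t _ => hS0 _
  set Ω := ball x₀ (R / 2) with hΩ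
  have hVpos : 0 < (volume Ω).toReal := vol_ball_pos x₀ (by positivity)
  have hVR : ∀ p : EuclideanSpace ℝ (Fin n),
      (volume (ball p R)).toReal = 2 ^ n * (volume Ω).toReal := by
    intro p
    rw [hΩ, vol_ball p hRpos, vol_ball x₀ (by positivity), ← mul_assoc, ← mul_pow]
    congr 2; ring
  have hHint : ∀ p ∈ ball x₀ (2 ^ (j + 1) * r),
      ∫ z in Ω, H p z ≤ (volume Ω).toReal * (8 ^ n * 15 * (j * SN)) := by
    intro p hp
    have hsub : Ω ⊆ ball p R := by
      apply ball_subset_ball'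
      rw [hρ, mem_ball, dist_comm] at hp
      linarith
    have h1 : ∫ z in Ω, H p z ≤ ∫ z in ball p R, H p z :=
      setIntegral_mono_set (cont_intOn (hHc p) _ _) (Filter.Eventually.of_forall (hH0 p))
        hsub.eventuallyLE
    have h2 := averaged_bound hScont p hRpos (fun t ht ht1 =>
      topS_dev A hAk N (fun γ h => (hN γ h).2) hr j hp ht ht1)
    refine h1.trans (h2.trans ?_)
    rw [hVR p, ← hSN]
    have h8 : (8 : ℝ) ^ n = 2 ^ n * 4 ^ n := by rw [← mul_pow]; norm_num
    rw [h8]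
    have hj1 : (1 : ℝ) ≤ j := by exact_mod_cast hj
    have : 4 ^ n * SN * (j + 6) + 2 * (4 ^ n * SN * 4) ≤ 4 ^ n * (15 * (j * SN)) := by
      have h4 : 0 ≤ 4 ^ n * SN := by positivity
      nlinarith
    calc _ ≤ 2 ^ n * (volume Ω).toReal * (4 ^ n * (15 * (j * SN))) :=
          mul_le_mul_of_nonneg_left this (by positivity)
      _ = _ := by ring
  -- main remainder
  set T := A x - ∑ d ∈ Finset.range k, jet A y (lin (x - y) ^ d) / (d.factorial : ℝ)
      - ev c (lin (x - y) ^ k) / (k.factorial : ℝ) with hT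
  have hpt : ∀ z ∈ Ω, |T| ≤ (n * R) ^ k * (H x z + k * H y z) := by
    intro z hz
    rw [hΩ, mem_ball, dist_eq_norm] at hz
    apply rem_le A c hk (Nat.lt_succ_self k) hAk x y z hvR
    · have := norm_sub_le_norm_sub_add_norm_sub z x₀ x
      rw [norm_sub_rev x₀ x] at this
      linarith
    · have := norm_sub_le_norm_sub_add_norm_sub z x₀ y
      rw [norm_sub_rev x₀ y] at this
      linarith
  have hTle : |T| ≤ (n * R) ^ k * ((k + 1) * (8 ^ n * 15 * (j * SN))) := by
    have h1 : ∫ z in Ω, |T| ≤ ∫ z in Ω, (n * R) ^ k * (H x z + k * H y z) :=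
      setIntegral_mono_on (cont_intOn continuous_const _ _)
        (cont_intOn (continuous_const.mul ((hHc x).add (continuous_const.mul (hHc y)))) _ _)
        measurableSet_ball hpt
    have hi2 : IntegrableOn (fun z => (k : ℝ) * H y z) Ω :=
      cont_intOn (continuous_const.mul (hHc y)) _ _
    rw [setIntegral_const, measureReal_def, smul_eq_mul, integral_const_mul,
      integral_add (cont_intOn (hHc x) _ _) hi2,
      integral_const_mul] at h1
    have h2 := hHint x hxρ
    have h3 := mul_le_mul_of_nonneg_left (hHint y hy.1) (Nat.cast_nonneg (α := ℝ) k)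
    have h4 := mul_le_mul_of_nonneg_left (add_le_add h2 h3) (by positivity : 0 ≤ (n * R) ^ k)
    have h5 := h1.trans h4
    refine le_of_mul_le_mul_left (h5.trans (le_of_eq ?_)) hVpos
    ring
  have hRk : (n * R) ^ k ≤ (n * 8) ^ k * ‖x - y‖ ^ k := by
    rw [← mul_pow]
    apply pow_le_pow_left₀ (by positivity)
    rw [mul_assoc]
    exact mul_le_mul_of_nonneg_left hRv hn'.le
  have htop : |jet A y (lin (x - y) ^ k) - ev c (lin (x - y) ^ k)| ≤
      (n * ‖x - y‖) ^ k * topS (k + 1) k A c y := by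
    have := ev_diff_le (fun γ => mderiv n γ A y) c (x - y) (x - y) le_rfl le_rfl
      (a := 0) (b := k) (m := k + 1) (by omega)
    simp only [pow_zero, mul_one, add_zero] at this
    exact this
  have hsplit : taylorRem n (k + 1) A x y = T -
      (jet A y (lin (x - y) ^ k) - ev c (lin (x - y) ^ k)) / (k.factorial : ℝ) := by
    rw [taylorRem_eq, Finset.sum_range_succ, hT]
    ring
  have hfac : |(jet A y (lin (x - y) ^ k) - ev c (lin (x - y) ^ k)) / (k.factorial : ℝ)| ≤
      (n * ‖x - y‖) ^ k * topS (k + 1) k A c y := by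
    rw [abs_div, Nat.abs_cast]
    refine (div_le_self (abs_nonneg _) ?_).trans htop
    exact_mod_cast Nat.factorial_pos k
  rw [hsplit, mul_add]
  refine (abs_sub _ _).trans (add_le_add ?_ ?_)
  · refine hTle.trans ((mul_le_mul_of_nonneg_right hRk (by positivity)).trans (le_of_eq ?_))
    ring
  · refine hfac.trans (mul_le_mul_of_nonneg_right ?_ (hS0 y))
    rw [mul_pow]
    refine mul_le_mul_of_nonneg_right ?_ (by positivity)
    have a1 : (n : ℝ) ^ k ≤ (n * 8) ^ k := pow_le_pow_left₀ hn'.le (by linarith) k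
    have a2 : (1 : ℝ) ≤ 8 ^ n := one_le_pow₀ (by norm_num)
    have a3 : (1 : ℝ) ≤ (k + 1) * (15 * 8 ^ n) := by
      have : (0 : ℝ) ≤ k := Nat.cast_nonneg k
      nlinarith
    calc (n : ℝ) ^ k ≤ (n * 8) ^ k * 1 := by rw [mul_one]; exact a1
      _ ≤ (n * 8) ^ k * ((k + 1) * (15 * 8 ^ n)) :=
        mul_le_mul_of_nonneg_left a3 (by positivity)
      _ = _ := by ring
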